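/- Let w be a Kreweras word of length 3n and let 1 ≤ i ≤ 3n with w_i ∈ {B, C}. Then either w_{σ_w(i)} = −w_i, or else w_{σ_w(i)} = A and w_{σ_w(σ_w(i))} = −w_i, where −B := C and −C := B. -/

import Mathlib

/-- The three letters of a Kreweras word. -/
inductive KLetter : Type
  | A | B | C
deriving DecidableEq, Repr

open KLetter

/-- `w` is a Kreweras word of length `3 * n`: it has `n` `A`'s, `n` `B`'s, `n` `C`'s,
and every prefix has at least as many `A`'s as `B`'s and at least as many `A`'s as `C`'s. -/
def IsKrewerasWord (n : ℕ) (w : List KLetter) : Prop :=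
  w.length = 3 * n ∧ w.count A = n ∧ w.count B = n ∧ w.count C = n ∧
  ∀ k : ℕ, (w.take k).count B ≤ (w.take k).count A ∧
           (w.take k).count C ≤ (w.take k).count A

/-- `kiota w` is the smallest index `ι ≥ 1` (1-indexed) such that the prefix of
length `ι` of `w` has equally many `A`'s as `B`'s, or equally many `A`'s as `C`'s
(and `0` if no such index exists). -/
def kiota (w : List KLetter) : ℕ :=
  (((List.range (w.length + 1)).filter fun k =>
      decide (1 ≤ k) &&
      (((w.take k).count A == (w.take k).count B) ||
       ((w.take k).count A == (w.take k).count C))).headD 0)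

/-- Promotion of a Kreweras word:
`pro w = (w₂, …, w_{ι-1}, A, w_{ι+1}, …, w_{3n}, w_ι)` where `ι = kiota w`. -/
def pro (w : List KLetter) : List KLetter :=
  ((w.drop 1).set (kiota w - 2) A) ++ [w.getD (kiota w - 1) A]

/-- The trip permutation `σ_w` of a Kreweras word of length `3 * n`, as a function on
1-indexed positions: `σ_w i` is the unique element of `{1, …, 3n}` congruent to
`kiota (pro^[i-1] w) + i - 1` modulo `3 * n`. -/
def ksigma (n : ℕ) (w : List KLetter) (i : ℕ) : ℕ :=
  (kiota (pro^[i - 1] w) + i - 2) % (3 * n) + 1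

/-- `keps w i` is the letter of `pro^[i-1] w` in (1-indexed) position `kiota (pro^[i-1] w)`. -/
def keps (w : List KLetter) (i : ℕ) : KLetter :=
  (pro^[i - 1] w).getD (kiota (pro^[i - 1] w) - 1) A

/-- The negation swapping `B` and `C` (and fixing `A`). -/
def negL : KLetter → KLetter
  | A => A
  | B => C
  | C => B

open Classical in
/-- The involution `τ_i` on Kreweras words of length `3 * n`: swap the letters in
(1-indexed) positions `i` and `i + 1` if the result is again a Kreweras word,
and otherwise do nothing. -/
noncomputable def tau (n i : ℕ) (w : List KLetter) : List KLetter :=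
  let w' := (w.set (i - 1) (w.getD i A)).set i (w.getD (i - 1) A)
  if IsKrewerasWord n w' then w' else w

/-- `tauDown n j = τ_j ∘ τ_{j-1} ∘ ⋯ ∘ τ_1`. -/
noncomputable def tauDown (n : ℕ) : ℕ → List KLetter → List KLetter
  | 0, w => w
  | j + 1, w => tau n (j + 1) (tauDown n j w)

/-- `evacAux n j = (tauDown n 1) ∘ (tauDown n 2) ∘ ⋯ ∘ (tauDown n j)`. -/
noncomputable def evacAux (n : ℕ) : ℕ → List KLetter → List KLetter
  | 0, w => w
  | j + 1, w => evacAux n j (tauDown n (j + 1) w)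

/-- Evacuation on Kreweras words of length `3 * n`:
`evac = (τ_1) ∘ (τ_2 ∘ τ_1) ∘ ⋯ ∘ (τ_{3n-1} ∘ ⋯ ∘ τ_2 ∘ τ_1)`. -/
noncomputable def evac (n : ℕ) (w : List KLetter) : List KLetter :=
  evacAux n (3 * n - 1) w

/-- `tauAsc n k c = τ_{k+c-1} ∘ ⋯ ∘ τ_{k+1} ∘ τ_k`. -/
noncomputable def tauAsc (n k : ℕ) : ℕ → List KLetter → List KLetter
  | 0, w => w
  | j + 1, w => tau n (k + j) (tauAsc n k j w)

/-- `evacStarAux n j = (tauAsc n 1 (3n-1)) ∘ (tauAsc n 2 (3n-2)) ∘ ⋯ ∘ (tauAsc n j (3n-j))`. -/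
noncomputable def evacStarAux (n : ℕ) : ℕ → List KLetter → List KLetter
  | 0, w => w
  | j + 1, w => evacStarAux n j (tauAsc n (j + 1) (3 * n - (j + 1)) w)

/-- Dual evacuation on Kreweras words of length `3 * n`:
`evac* = (τ_{3n-1} ∘ ⋯ ∘ τ_1) ∘ (τ_{3n-1} ∘ ⋯ ∘ τ_2) ∘ ⋯ ∘ (τ_{3n-1})`. -/
noncomputable def evacStar (n : ℕ) (w : List KLetter) : List KLetter :=
  evacStarAux n (3 * n - 1) w

/-- The three-element "V"-shaped poset: `a < b`, `a < c`, with `b`, `c` incomparable. -/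
inductive VP : Type
  | a | b | c
deriving DecidableEq

instance : PartialOrder VP where
  le x y := x = y ∨ x = VP.a
  le_refl x := Or.inl rfl
  le_trans x y z hxy hyz := by
    rcases hxy with rfl | rfl
    · exact hyz
    · exact Or.inr rfl
  le_antisymm x y hxy hyx := by
    rcases hxy with rfl | rfl
    · rfl
    · rcases hyx with rfl | rfl <;> rfl

/-- The labeling of elements of `V(n) = VP × Fin n` by letters. -/
def vlabel {n : ℕ} (p : VP × Fin n) : KLetter :=
  match p.1 with
  | VP.a => A
  | VP.b => B
  | VP.c => C

/-- `L` is a linear extension of `V(n) = VP × Fin n` (with the product order):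
a list of all elements of `V(n)`, each appearing once, such that `L_i ≤ L_j`
implies `i ≤ j`. -/
def IsLinearExtension (n : ℕ) (L : List (VP × Fin n)) : Prop :=
  L.Nodup ∧ (∀ p : VP × Fin n, p ∈ L) ∧
  ∀ i j : Fin L.length, L.get i ≤ L.get j → (i : ℕ) ≤ (j : ℕ)

/-- A connected Kreweras word: a Kreweras word of length `3 * n` having no proper
nonempty consecutive substring which is itself a Kreweras word. -/
def ConnectedKrewerasWord (n : ℕ) (w : List KLetter) : Prop :=
  IsKrewerasWord n w ∧
  ∀ (u : List KLetter) (m : ℕ), u <:+: w → u ≠ [] → u ≠ w → ¬ IsKrewerasWord m u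

/-!
Write `pro^[j] w` in row `j` and columns `j + 1, …, j + 3 * n` of an infinite array. Passing from a
row to the next one drops the initial `A`, turns the letter in the hit column into an `A`, and
appends that letter on the right. So each letter `B` or `C` stays in its column until it is hit, and
the hit columns modulo `3 * n` are the values of `σ_w`. In terms of heights (the excess of `A`s over
a fixed letter), the step lowers by one the heights before the hit column and raises by at most one
those from that column on, so that the height difference between two fixed columns never decreases
down the array.

This monotonicity shows that, if row `j` hits column `i`, then row `i - 1` hits the opposite
letter, in a column at most `j + 3 * n`. A second comparison of the heights for the two letters
gives `kiota w ≤ kiota (pro^[3 * n] w)`; as `pro` is injective on the finite set of Kreweras words,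
equality holds, and the hit columns are periodic: `hitCol w (j + 3 * n) = hitCol w j + 3 * n`.

Let now `w_i ∈ {B, C}` be hit in row `j`. If row `i - 1` hits a column at most `3 * n`, then `w` has
the opposite letter there. Otherwise it hits some column `c + 3 * n`, where the letter is the one
hit by row `c - 1`. By periodicity column `c` is not hit in any row, so `w_c = A`, and row `c - 1`
hits a column at most `3 * n`.
-/

instance : Fintype KLetter where
  elems := {A, B, C}
  complete x := by cases x <;> decide

theorem mem_periodicPts_of_injOn {α : Type*} {f : α → α} {s : Set α} (hs : s.Finite)
    (hmaps : Set.MapsTo f s s) (hinj : Set.InjOn f s) {a : α} (ha : a ∈ s) :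
    a ∈ Function.periodicPts f := by
  have := hs.to_subtype
  have hsemiconj : Function.Semiconj Subtype.val (hmaps.restrict f s s) f := fun _ ↦ rfl
  exact hsemiconj.mapsTo_periodicPts ((hmaps.restrict_inj.2 hinj).mem_periodicPts ⟨a, ha⟩)

theorem negL_ne_A {x : KLetter} (hx : x ≠ A) : negL x ≠ A := by
  cases x <;> simp_all [negL]

theorem negL_ne_self {x : KLetter} (hx : x ≠ A) : negL x ≠ x := by
  cases x <;> simp_all [negL]

theorem eq_or_eq_negL {x y : KLetter} (hx : x ≠ A) (hy : y ≠ A) : y = x ∨ y = negL x := by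
  cases x <;> cases y <;> simp_all [negL]

theorem count_A_add_count_B_add_count_C (w : List KLetter) :
    w.count A + w.count B + w.count C = w.length := by
  induction w with
  | nil => rfl
  | cons a w ih => cases a <;> simp <;> omega

/-- The excess of `A`s over `x`s in the prefix of length `k` of `w`. -/
def height (x : KLetter) (w : List KLetter) (k : ℕ) : ℤ :=
  (w.take k).count A - (w.take k).count x

@[simp]
theorem height_zero (x : KLetter) (w : List KLetter) : height x w 0 = 0 := by
  simp [height]

theorem height_succ (x : KLetter) {w : List KLetter} {k : ℕ} (hk : k < w.length) :
    height x w (k + 1) =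
      height x w k + (if w.getD k A = A then 1 else 0) - if w.getD k A = x then 1 else 0 := by
  have hcount (y : KLetter) :
      (w.take (k + 1)).count y = (w.take k).count y + if w.getD k A = y then 1 else 0 := by
    rw [List.take_add_one, List.count_append, List.getD_eq_getElem _ _ hk,
      List.getElem?_eq_getElem hk, Option.toList_some, List.count_singleton]
    simp only [beq_iff_eq]
  simp only [height, hcount]
  push_cast
  ring

theorem height_of_length_le (x : KLetter) {w : List KLetter} {k : ℕ} (hk : w.length ≤ k) :
    height x w k = height x w w.length := by
  simp [height, List.take_of_length_le hk]

theorem isKrewerasWord_iff {n : ℕ} {w : List KLetter} :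
    IsKrewerasWord n w ↔ w.length = 3 * n ∧
      ∀ x ≠ A, height x w (3 * n) = 0 ∧ ∀ k < 3 * n, 0 ≤ height x w k := by
  constructor
  · rintro ⟨hlen, hA, hB, hC, hle⟩
    refine ⟨hlen, fun x hx ↦ ⟨?_, fun k _ ↦ ?_⟩⟩
    · rw [height, List.take_of_length_le hlen.le, hA]
      cases x <;> simp_all
    · have := hle k
      cases x <;> simp_all [height]
  · rintro ⟨hlen, hheight⟩
    have hnonneg (x : KLetter) (hx : x ≠ A) (k : ℕ) : 0 ≤ height x w k := by
      rcases lt_or_ge k (3 * n) with hk | hk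
      · exact (hheight x hx).2 k hk
      · rw [height_of_length_le x (hlen.trans_le hk), hlen, (hheight x hx).1]
    have hB := (hheight B (by decide)).1
    have hC := (hheight C (by decide)).1
    have hsum := count_A_add_count_B_add_count_C w
    rw [← hlen] at hB hC
    simp only [height, List.take_length] at hB hC
    refine ⟨hlen, by lia, by lia, by lia, fun k ↦ ?_⟩
    have hBk := hnonneg B (by decide) k
    have hCk := hnonneg C (by decide) k
    simp only [height] at hBk hCk
    lia

theorem finite_setOf_isKrewerasWord (n : ℕ) : {w | IsKrewerasWord n w}.Finite :=
  (List.finite_length_eq KLetter (3 * n)).subset fun _ hw ↦ hw.1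

/-- The letter completing the shortest nonempty prefix of `w` that has height `0` with respect to
`B` or `C`: the letter of `w` at its (1-indexed) position `kiota w`. -/
def hitLetter (w : List KLetter) : KLetter :=
  w.getD (kiota w - 1) A

namespace IsKrewerasWord

variable {n : ℕ} {w : List KLetter}

theorem length_eq (hw : IsKrewerasWord n w) : w.length = 3 * n :=
  hw.1

theorem height_length (hw : IsKrewerasWord n w) {x : KLetter} (hx : x ≠ A) :
    height x w (3 * n) = 0 :=
  ((isKrewerasWord_iff.1 hw).2 x hx).1

theorem height_nonneg (hw : IsKrewerasWord n w) {x : KLetter} (hx : x ≠ A) (k : ℕ) :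
    0 ≤ height x w k := by
  have := hw.2.2.2.2 k
  cases x <;> simp_all [height]

theorem getD_pro_last (hw : IsKrewerasWord n w) : (pro w).getD (3 * n - 1) A = hitLetter w := by
  have hlen := hw.length_eq
  rw [pro, List.getD_append_right _ _ _ _ (by simp; lia)]
  simp [hlen, hitLetter]

variable [NeZero n]

theorem isLeast_kiota (hw : IsKrewerasWord n w) :
    IsLeast {k | 1 ≤ k ∧ ∃ x ≠ A, height x w k = 0} (kiota w) := by
  set p : ℕ → Bool := fun k ↦ decide (1 ≤ k) &&
    (((w.take k).count A == (w.take k).count B) || ((w.take k).count A == (w.take k).count C))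
    with hp
  have hp_iff (k : ℕ) : p k = true ↔ 1 ≤ k ∧ ∃ x ≠ A, height x w k = 0 := by
    simp only [hp, height, Bool.and_eq_true, decide_eq_true_eq, Bool.or_eq_true, beq_iff_eq,
      sub_eq_zero, Nat.cast_inj]
    refine and_congr_right fun _ ↦ ⟨?_, ?_⟩
    · rintro (h | h)
      exacts [⟨B, by decide, h⟩, ⟨C, by decide, h⟩]
    · rintro ⟨x, hx, h⟩
      cases x <;> simp_all
  have hlen : p w.length = true :=
    (hp_iff _).2 ⟨hw.length_eq ▸ NeZero.one_le, B, by decide,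
      hw.length_eq ▸ hw.height_length (by decide)⟩
  have hkiota : kiota w = ((List.range (w.length + 1)).find? p).getD 0 := by
    rw [kiota, ← hp, List.headD_eq_head?_getD, List.head?_filter]
  obtain ⟨k, hk⟩ : ∃ k, (List.range (w.length + 1)).find? p = some k :=
    Option.isSome_iff_exists.1 (List.find?_isSome.2 ⟨w.length, by simp, hlen⟩)
  rw [hkiota, hk, Option.getD_some]
  obtain ⟨hpk, -, hmin⟩ := List.find?_range_eq_some.1 hk
  refine ⟨(hp_iff k).1 hpk, fun l hl ↦ not_lt.1 fun hlk ↦ ?_⟩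
  simpa [(hp_iff l).2 hl] using hmin l hlk

theorem height_pos (hw : IsKrewerasWord n w) {x : KLetter} (hx : x ≠ A) {k : ℕ} (hk : 0 < k)
    (hk' : k < kiota w) : 0 < height x w k :=
  (hw.height_nonneg hx k).lt_of_ne' fun h ↦ hk'.not_ge (hw.isLeast_kiota.2 ⟨hk, x, hx, h⟩)

theorem kiota_le (hw : IsKrewerasWord n w) : kiota w ≤ 3 * n :=
  hw.isLeast_kiota.2 ⟨NeZero.one_le, B, by decide, hw.height_length (by decide)⟩

theorem getD_zero (hw : IsKrewerasWord n w) : w.getD 0 A = A := by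
  by_contra hA
  have h := height_succ (w.getD 0 A) (k := 0) (hw.length_eq ▸ Nat.pos_of_neZero (3 * n))
  rw [if_neg hA, if_pos rfl, height_zero] at h
  have := hw.height_nonneg hA (0 + 1)
  lia

theorem height_one (hw : IsKrewerasWord n w) {x : KLetter} (hx : x ≠ A) : height x w 1 = 1 := by
  have h := height_succ x (k := 0) (hw.length_eq ▸ Nat.pos_of_neZero (3 * n))
  rwa [hw.getD_zero, if_pos rfl, if_neg hx.symm, height_zero] at h

theorem two_le_kiota (hw : IsKrewerasWord n w) : 2 ≤ kiota w := by
  obtain ⟨hpos, x, hx, h⟩ := hw.isLeast_kiota.1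
  have hne : kiota w ≠ 1 := fun h1 ↦ by simp [h1, hw.height_one hx] at h
  lia

theorem hitLetter_ne_A (hw : IsKrewerasWord n w) : hitLetter w ≠ A := by
  intro hA
  have := hw.two_le_kiota
  have := hw.kiota_le
  obtain ⟨-, x, hx, h⟩ := hw.isLeast_kiota.1
  have hstep := height_succ x (w := w) (k := kiota w - 1) (by rw [hw.length_eq]; lia)
  rw [Nat.sub_add_cancel (by lia), h, ← hitLetter, hA, if_pos rfl, if_neg hx.symm] at hstep
  have := hw.height_nonneg hx (kiota w - 1)
  lia

theorem height_kiota_sub_one (hw : IsKrewerasWord n w) (x : KLetter) :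
    height x w (kiota w - 1) = height x w (kiota w) + if hitLetter w = x then 1 else 0 := by
  have := hw.two_le_kiota
  have := hw.kiota_le
  have hstep := height_succ x (w := w) (k := kiota w - 1) (by rw [hw.length_eq]; lia)
  rw [Nat.sub_add_cancel (by lia), ← hitLetter, if_neg hw.hitLetter_ne_A] at hstep
  lia

theorem height_hitLetter_kiota (hw : IsKrewerasWord n w) :
    height (hitLetter w) w (kiota w) = 0 := by
  obtain ⟨-, x, hx, h⟩ := hw.isLeast_kiota.1
  have := hw.two_le_kiota
  have hpos := hw.height_pos hx (k := kiota w - 1) (by lia) (by lia)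
  rw [hw.height_kiota_sub_one, h] at hpos
  have hhit : hitLetter w = x := by
    by_contra hne
    simp [hne] at hpos
  rwa [hhit]

theorem kiota_lt (hw : IsKrewerasWord n w) : kiota w < 3 * n := by
  refine hw.kiota_le.lt_of_ne fun h ↦ ?_
  have hx := negL_ne_A hw.hitLetter_ne_A
  have := hw.two_le_kiota
  have hpos := hw.height_pos hx (k := kiota w - 1) (by lia) (by lia)
  rw [hw.height_kiota_sub_one, if_neg (negL_ne_self hw.hitLetter_ne_A).symm, h,
    hw.height_length hx] at hpos
  lia

theorem length_pro (hw : IsKrewerasWord n w) : (pro w).length = 3 * n := by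
  have := hw.length_eq
  have := NeZero.one_le (n := n)
  simp [pro]
  lia

theorem getD_pro (hw : IsKrewerasWord n w) {k : ℕ} (hk : k + 1 < 3 * n) :
    (pro w).getD k A = if k + 2 = kiota w then A else w.getD (k + 1) A := by
  have hlen := hw.length_eq
  have := hw.two_le_kiota
  rw [pro, List.getD_append _ _ _ _ (by simp; lia), List.getD_eq_getElem _ _ (by simp; lia),
    List.getElem_set, List.getD_eq_getElem _ _ (by lia)]
  simp only [List.getElem_drop, Nat.add_comm 1 k]
  exact if_congr (by lia) rfl rfl

theorem height_pro (hw : IsKrewerasWord n w) {x : KLetter} (hx : x ≠ A) {k : ℕ}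
    (hk : k < 3 * n) :
    height x (pro w) k = height x w (k + 1) +
      if k + 1 < kiota w then -1 else if hitLetter w = x then 1 else 0 := by
  have := hw.two_le_kiota
  have hlen := hw.length_eq
  have hlen' := hw.length_pro
  induction k with
  | zero =>
    rw [if_pos (by lia), hw.height_one hx, height_zero]
    rfl
  | succ k ih =>
    rw [height_succ x (by lia), ih (by lia), hw.getD_pro hk]
    rcases eq_or_ne (k + 2) (kiota w) with hk' | hk'
    · have h := hw.height_kiota_sub_one x
      rw [← hk', show k + 2 - 1 = k + 1 by lia] at h
      rw [if_pos hk', if_pos rfl, if_neg hx.symm, if_pos (by lia), if_neg (by lia), h]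
      ring
    · rw [if_neg hk', height_succ x (w := w) (k := k + 1) (by lia),
        if_congr (show k + 1 < kiota w ↔ k + 1 + 1 < kiota w by lia) rfl rfl]
      ring

theorem height_pro_length (hw : IsKrewerasWord n w) {x : KLetter} (hx : x ≠ A) :
    height x (pro w) (3 * n) = 0 := by
  have := hw.kiota_lt
  have h := height_succ x (w := pro w) (k := 3 * n - 1) (by rw [hw.length_pro]; lia)
  rw [hw.getD_pro_last, hw.height_pro hx (k := 3 * n - 1) (by lia), Nat.sub_add_cancel (by lia),
    hw.height_length hx, if_neg (by lia), if_neg hw.hitLetter_ne_A] at h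
  lia

protected theorem pro (hw : IsKrewerasWord n w) : IsKrewerasWord n (pro w) := by
  refine isKrewerasWord_iff.2 ⟨hw.length_pro, fun x hx ↦ ⟨hw.height_pro_length hx, fun k hk ↦ ?_⟩⟩
  rw [hw.height_pro hx hk]
  split_ifs with hlt
  · have := hw.height_pos hx (by lia) hlt
    lia
  all_goals
    have := hw.height_nonneg hx (k + 1)
    lia

theorem iterate_pro (hw : IsKrewerasWord n w) (j : ℕ) : IsKrewerasWord n (pro^[j] w) := by
  induction j with
  | zero => exact hw
  | succ j ih => simpa only [Function.iterate_succ_apply'] using ih.pro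

theorem kiota_le_of_pro_eq {v : List KLetter} (hv : IsKrewerasWord n v) (hw : IsKrewerasWord n w)
    (h : pro v = pro w) (hhit : hitLetter v = hitLetter w) : kiota w ≤ kiota v := by
  by_contra hlt
  have := hv.two_le_kiota
  have := hw.kiota_lt
  have hv_height := hv.height_pro hw.hitLetter_ne_A (k := kiota w - 2) (by lia)
  rw [if_neg (by lia), if_pos hhit, h, hw.height_pro hw.hitLetter_ne_A (by lia),
    if_pos (by lia), show kiota w - 2 + 1 = kiota w - 1 by lia, hw.height_kiota_sub_one,
    hw.height_hitLetter_kiota, if_pos rfl] at hv_height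
  have := hv.height_nonneg hw.hitLetter_ne_A (kiota w - 1)
  lia

end IsKrewerasWord

theorem pro_injOn (n : ℕ) [NeZero n] : Set.InjOn pro {w | IsKrewerasWord n w} := by
  intro v (hv : IsKrewerasWord n v) w (hw : IsKrewerasWord n w) h
  have hhit : hitLetter v = hitLetter w := by
    rw [← hv.getD_pro_last, ← hw.getD_pro_last, h]
  have hkiota : kiota v = kiota w :=
    le_antisymm (hw.kiota_le_of_pro_eq hv h.symm hhit.symm) (hv.kiota_le_of_pro_eq hw h hhit)
  refine List.ext_getElem (hv.length_eq.trans hw.length_eq.symm) fun k hk hk' ↦ ?_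
  rw [← List.getD_eq_getElem v A hk, ← List.getD_eq_getElem w A hk']
  rw [hv.length_eq] at hk
  obtain _ | k := k
  · rw [hv.getD_zero, hw.getD_zero]
  · have hpro := congrArg (List.getD · k A) h
    simp only [hv.getD_pro hk, hw.getD_pro hk, ← hkiota] at hpro
    split_ifs at hpro with hk2
    · rwa [hitLetter, hitLetter, ← hkiota, ← hk2] at hhit
    · exact hpro

/-- The column hit in row `j` of the growth diagram of `w`, whose row `j` is the word `pro^[j] w`
written in the columns `j + 1, …, j + w.length`. -/
def hitCol (w : List KLetter) (j : ℕ) : ℕ :=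
  j + kiota (pro^[j] w)

/-- The letter hit in row `j` of the growth diagram of `w`. -/
def rowHit (w : List KLetter) (j : ℕ) : KLetter :=
  hitLetter (pro^[j] w)

/-- The letter in row `j` and column `m` of the growth diagram of `w`. -/
def rowLetter (w : List KLetter) (j m : ℕ) : KLetter :=
  (pro^[j] w).getD (m - j - 1) A

/-- The height with respect to `x` of row `j` of the growth diagram of `w` after column `m`. -/
def rowHeight (w : List KLetter) (x : KLetter) (j m : ℕ) : ℤ :=
  height x (pro^[j] w) (m - j)

theorem hitCol_zero (w : List KLetter) : hitCol w 0 = kiota w :=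
  Nat.zero_add _

theorem rowHit_zero (w : List KLetter) : rowHit w 0 = hitLetter w :=
  rfl

theorem rowHit_iterate_pro (w : List KLetter) (i j : ℕ) :
    rowHit (pro^[i] w) j = rowHit w (j + i) := by
  rw [rowHit, rowHit, Function.iterate_add_apply]

theorem hitCol_iterate_pro (w : List KLetter) (i j : ℕ) :
    hitCol (pro^[i] w) j + i = hitCol w (j + i) := by
  rw [hitCol, hitCol, Function.iterate_add_apply]
  lia

theorem rowHeight_self (w : List KLetter) (x : KLetter) (j : ℕ) : rowHeight w x j j = 0 := by
  simp [rowHeight]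

theorem rowLetter_hitCol (w : List KLetter) (j : ℕ) : rowLetter w j (hitCol w j) = rowHit w j := by
  rw [rowLetter, hitCol, Nat.add_sub_cancel_left]
  rfl

namespace IsKrewerasWord

variable {n : ℕ} [NeZero n] {w : List KLetter} {x y : KLetter} {i j k m : ℕ}

theorem rowHit_ne_A (hw : IsKrewerasWord n w) (j : ℕ) : rowHit w j ≠ A :=
  (hw.iterate_pro j).hitLetter_ne_A

theorem add_two_le_hitCol (hw : IsKrewerasWord n w) (j : ℕ) : j + 2 ≤ hitCol w j :=
  Nat.add_le_add_left (hw.iterate_pro j).two_le_kiota j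

theorem hitCol_lt (hw : IsKrewerasWord n w) (j : ℕ) : hitCol w j < j + 3 * n :=
  Nat.add_lt_add_left (hw.iterate_pro j).kiota_lt j

theorem rowHeight_add_length (hw : IsKrewerasWord n w) (hx : x ≠ A) (j : ℕ) :
    rowHeight w x j (j + 3 * n) = 0 := by
  rw [rowHeight, Nat.add_sub_cancel_left, (hw.iterate_pro j).height_length hx]

theorem rowHeight_nonneg (hw : IsKrewerasWord n w) (hx : x ≠ A) (j m : ℕ) :
    0 ≤ rowHeight w x j m :=
  (hw.iterate_pro j).height_nonneg hx _

theorem rowHeight_pos (hw : IsKrewerasWord n w) (hx : x ≠ A) (hj : j < m) (hm : m < hitCol w j) :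
    0 < rowHeight w x j m :=
  (hw.iterate_pro j).height_pos hx (by lia) (by rw [hitCol] at hm; lia)

theorem rowHeight_hitCol (hw : IsKrewerasWord n w) (hhit : rowHit w j = x) :
    rowHeight w x j (hitCol w j) = 0 := by
  rw [rowHeight, hitCol, Nat.add_sub_cancel_left, ← hhit]
  exact (hw.iterate_pro j).height_hitLetter_kiota

theorem rowHeight_hitCol_sub_one (hw : IsKrewerasWord n w) (x : KLetter) (j : ℕ) :
    rowHeight w x j (hitCol w j - 1) =
      rowHeight w x j (hitCol w j) + if rowHit w j = x then 1 else 0 := by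
  have h := (hw.iterate_pro j).height_kiota_sub_one x
  rwa [rowHeight, rowHeight, hitCol, Nat.add_sub_cancel_left,
    show j + kiota (pro^[j] w) - 1 - j = kiota (pro^[j] w) - 1 by lia]

theorem rowHeight_hitCol_sub_one_of_rowHit_eq (hw : IsKrewerasWord n w) (hhit : rowHit w j = x) :
    rowHeight w x j (hitCol w j - 1) = 1 := by
  rw [hw.rowHeight_hitCol_sub_one, hw.rowHeight_hitCol hhit, if_pos hhit, zero_add]

theorem rowHeight_hitCol_sub_one_of_rowHit_ne (hw : IsKrewerasWord n w) (hhit : rowHit w j ≠ x) :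
    rowHeight w x j (hitCol w j - 1) = rowHeight w x j (hitCol w j) := by
  rw [hw.rowHeight_hitCol_sub_one, if_neg hhit, add_zero]

theorem rowHeight_succ (hw : IsKrewerasWord n w) (hx : x ≠ A) (hj : j < m) (hm : m ≤ j + 3 * n) :
    rowHeight w x (j + 1) m = rowHeight w x j m +
      if m < hitCol w j then -1 else if rowHit w j = x then 1 else 0 := by
  rw [rowHeight, Function.iterate_succ_apply', (hw.iterate_pro j).height_pro hx (by lia),
    show m - (j + 1) + 1 = m - j by lia, ← rowHeight, hitCol, rowHit]
  congr 1
  exact if_congr (by lia) rfl rfl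

theorem rowHeight_sub_le_succ (hw : IsKrewerasWord n w) (hx : x ≠ A) (hj : j < k) (hkm : k ≤ m)
    (hm : m ≤ j + 3 * n) :
    rowHeight w x j m - rowHeight w x j k ≤
      rowHeight w x (j + 1) m - rowHeight w x (j + 1) k := by
  rw [hw.rowHeight_succ hx hj (by lia), hw.rowHeight_succ hx (by lia) hm]
  lia

theorem rowHeight_sub_le (hw : IsKrewerasWord n w) (hx : x ≠ A) (hij : i ≤ j) (hj : j ≤ k)
    (hkm : k ≤ m) (hm : m ≤ i + 3 * n) :
    rowHeight w x i m - rowHeight w x i k ≤ rowHeight w x j m - rowHeight w x j k := by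
  induction j, hij using Nat.le_induction with
  | base => rfl
  | succ j hij ih =>
    exact (ih (by lia)).trans (hw.rowHeight_sub_le_succ hx (by lia) hkm (by lia))

theorem rowLetter_self (hw : IsKrewerasWord n w) (j : ℕ) : rowLetter w j (j + 1) = A := by
  rw [rowLetter, Nat.add_sub_cancel_left]
  exact (hw.iterate_pro j).getD_zero

theorem rowLetter_succ (hw : IsKrewerasWord n w) (hj : j + 1 < m) (hm : m ≤ j + 3 * n) :
    rowLetter w (j + 1) m = if m = hitCol w j then A else rowLetter w j m := by
  rw [rowLetter, Function.iterate_succ_apply', (hw.iterate_pro j).getD_pro (by lia),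
    show m - (j + 1) - 1 + 1 = m - j - 1 by lia, ← rowLetter, hitCol]
  exact if_congr (by lia) rfl rfl

theorem rowLetter_succ_last (hw : IsKrewerasWord n w) (j : ℕ) :
    rowLetter w (j + 1) (j + 1 + 3 * n) = rowHit w j := by
  rw [rowLetter, Function.iterate_succ_apply', Nat.add_sub_cancel_left,
    (hw.iterate_pro j).getD_pro_last, rowHit]

theorem rowLetter_eq_of_le (hw : IsKrewerasWord n w) (hij : i ≤ j) (hj : j < m)
    (hm : m ≤ i + 3 * n) (hA : rowLetter w j m ≠ A) : rowLetter w i m = rowLetter w j m := by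
  induction j, hij using Nat.le_induction with
  | base => rfl
  | succ j hij ih =>
    have hstep := hw.rowLetter_succ hj (by lia)
    split_ifs at hstep with hhit
    · exact absurd hstep hA
    · rw [hstep] at hA ⊢
      exact ih (by lia) hA

theorem hitCol_injective (hw : IsKrewerasWord n w) : Function.Injective (hitCol w) := by
  have hne (i j : ℕ) (hij : i < j) : hitCol w i ≠ hitCol w j := by
    intro h
    have := hw.add_two_le_hitCol j
    have := hw.hitCol_lt i
    have hA : rowLetter w j (hitCol w j) ≠ A := rowLetter_hitCol w j ▸ hw.rowHit_ne_A j
    have hstep := hw.rowLetter_succ (j := i) (m := hitCol w j) (by lia) (by lia)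
    rw [if_pos h.symm, hw.rowLetter_eq_of_le hij (by lia) (by lia) hA] at hstep
    exact hA hstep
  intro i j h
  by_contra hij
  rcases lt_or_gt_of_ne hij with hlt | hlt
  exacts [hne i j hlt h, hne j i hlt h.symm]

theorem exists_hitCol_eq (hw : IsKrewerasWord n w) {j : ℕ} (hj : j < m) (hm : m ≤ j + 3 * n)
    (hA : rowLetter w j m ≠ A) : ∃ i ≥ j, hitCol w i = m ∧ rowHit w i = rowLetter w j m := by
  rcases eq_or_ne (hitCol w j) m with h | h
  · exact ⟨j, le_rfl, h, by rw [← h, rowLetter_hitCol]⟩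
  · have hjm : j + 1 ≠ m := fun hjm ↦ hA (hjm ▸ hw.rowLetter_self j)
    have hstep := hw.rowLetter_succ (j := j) (m := m) (by lia) hm
    rw [if_neg h.symm] at hstep
    obtain ⟨i, hi, hcol, hlet⟩ :=
      exists_hitCol_eq hw (j := j + 1) (by lia) (by lia) (hstep ▸ hA)
    exact ⟨i, by lia, hcol, hlet.trans hstep⟩
termination_by m - j

end IsKrewerasWord

namespace IsKrewerasWord

variable {n : ℕ} {w : List KLetter} {x y : KLetter} {a j m : ℕ}

theorem rowHeight_zero_length (hw : IsKrewerasWord n w) (hx : x ≠ A) :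
    rowHeight w x 0 (3 * n) = 0 :=
  hw.height_length hx

variable [NeZero n]

theorem rowHit_eq_or_eq (hw : IsKrewerasWord n w) (hx : x ≠ A) (hy : y ≠ A) (hxy : y ≠ x)
    (j : ℕ) : rowHit w j = x ∨ rowHit w j = y := by
  rcases eq_or_eq_negL hx (hw.rowHit_ne_A j) with h | h
  · exact .inl h
  · exact .inr (h.trans ((eq_or_eq_negL hx hy).resolve_left hxy).symm)

theorem hitCol_ne_kiota (hw : IsKrewerasWord n w) (hj : 1 ≤ j) : hitCol w j ≠ kiota w :=
  hitCol_zero w ▸ hw.hitCol_injective.ne (by lia)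

theorem rowHeight_one (hw : IsKrewerasWord n w) (ha : kiota w = a + 1) (hx : x ≠ A)
    (hm : 1 ≤ m) (hm' : m ≤ 3 * n) :
    rowHeight w x 1 m = rowHeight w x 0 m +
      if m ≤ a then -1 else if hitLetter w = x then 1 else 0 := by
  rw [hw.rowHeight_succ hx (j := 0) (by lia) (by lia), hitCol_zero, rowHit_zero, ha]
  congr 1
  exact if_congr (by lia) rfl rfl

theorem rowHeight_hitLetter_one (hw : IsKrewerasWord n w) (ha : kiota w = a + 1) :
    rowHeight w (hitLetter w) 1 a = 0 := by
  have := hw.two_le_kiota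
  have := hw.kiota_lt
  have hcol := hw.rowHeight_hitCol_sub_one_of_rowHit_eq (rowHit_zero w)
  rw [hitCol_zero, ha, Nat.add_sub_cancel] at hcol
  rw [hw.rowHeight_one ha hw.hitLetter_ne_A (by lia) (by lia), if_pos le_rfl, hcol]
  rfl

theorem rowHeight_hitLetter_lt (hw : IsKrewerasWord n w) (ha : kiota w = a + 1) (hj : 1 ≤ j)
    (hja : j ≤ a) (ham : a < m) (hm : m ≤ 3 * n) :
    rowHeight w (hitLetter w) j a < rowHeight w (hitLetter w) j m := by
  have hx := hw.hitLetter_ne_A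
  have hone := hw.rowHeight_one ha hx (by lia) hm
  have := hw.rowHeight_nonneg hx 0 m
  have := hw.rowHeight_hitLetter_one ha
  have := hw.rowHeight_sub_le hx hj hja ham.le (by lia)
  lia

theorem lt_hitCol_of_rowHit_eq (hw : IsKrewerasWord n w) (ha : kiota w = a + 1) (hj : 1 ≤ j)
    (hja : j < a) (hcol : a < hitCol w j) (hhit : rowHit w j = hitLetter w) :
    3 * n + 1 < hitCol w j := by
  by_contra hle
  have hne := hw.hitCol_ne_kiota hj
  have hpos := hw.rowHeight_pos hw.hitLetter_ne_A hja hcol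
  have hlt := hw.rowHeight_hitLetter_lt ha hj hja.le (m := hitCol w j - 1) (by lia) (by lia)
  rw [hw.rowHeight_hitCol_sub_one_of_rowHit_eq hhit] at hlt
  lia

theorem exists_rowHeight_le (hw : IsKrewerasWord n w) (ha : kiota w = a + 1) (hy : y ≠ A)
    (hyx : y ≠ hitLetter w) (hj : 1 ≤ j) (hja : j ≤ a) :
    ∃ m, a < m ∧ m ≤ 3 * n ∧ rowHeight w y j m ≤ rowHeight w y j a := by
  have := hw.kiota_lt
  induction j, hj using Nat.le_induction with
  | base =>
    refine ⟨3 * n, by lia, le_rfl, ?_⟩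
    have hone_a := hw.rowHeight_one ha hy hja (by lia)
    have hone_last := hw.rowHeight_one ha hy (m := 3 * n) (by lia) le_rfl
    have hlast := hw.rowHeight_zero_length hy
    have hpos := hw.rowHeight_pos hy (j := 0) (m := a) (by lia) (by rw [hitCol_zero]; lia)
    lia
  | succ j hj ih =>
    obtain ⟨m, ham, hm, hle⟩ := ih (by lia)
    have hstep (k : ℕ) (hk : a ≤ k) (hk' : k ≤ 3 * n) :=
      hw.rowHeight_succ hy (j := j) (m := k) (by lia) (by lia)
    have hstep_a := hstep a le_rfl (by lia)
    have hstep_m := hstep m ham.le hm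
    rcases lt_or_ge m (hitCol w j) with hms | hsm
    · exact ⟨m, ham, hm, by lia⟩
    rcases le_or_gt (hitCol w j) a with hsa | has
    · exact ⟨m, ham, hm, by lia⟩
    have hne := hw.hitCol_ne_kiota hj
    have hhit : rowHit w j = y :=
      (hw.rowHit_eq_or_eq hw.hitLetter_ne_A hy hyx j).resolve_left fun hhit ↦ by
        have := hw.lt_hitCol_of_rowHit_eq ha hj hja has hhit
        lia
    have hpred := hw.rowHeight_hitCol_sub_one_of_rowHit_eq hhit
    have hpos := hw.rowHeight_pos hy hja has
    have hstep_pred := hstep (hitCol w j - 1) (by lia) (by lia)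
    exact ⟨hitCol w j - 1, by lia, by lia, by lia⟩

theorem hitCol_le_and_rowHit_eq_negL (hw : IsKrewerasWord n w) (ha : kiota w = a + 1) :
    hitCol w a ≤ 3 * n ∧ rowHit w a = negL (hitLetter w) := by
  have hx := hw.hitLetter_ne_A
  have ha1 : 1 ≤ a := by have := hw.two_le_kiota; lia
  have := hw.add_two_le_hitCol a
  obtain ⟨m, ham, hm, hle⟩ :=
    hw.exists_rowHeight_le ha (negL_ne_A hx) (negL_ne_self hx) ha1 le_rfl
  rw [rowHeight_self] at hle
  have hcol : hitCol w a ≤ 3 * n := by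
    by_contra hlt
    have := hw.rowHeight_pos (negL_ne_A hx) ham (by lia)
    lia
  refine ⟨hcol, (eq_or_eq_negL hx (hw.rowHit_ne_A a)).resolve_left fun hhit ↦ ?_⟩
  have hlt := hw.rowHeight_hitLetter_lt ha ha1 le_rfl (m := hitCol w a) (by lia) hcol
  rw [rowHeight_self, hw.rowHeight_hitCol hhit] at hlt
  exact hlt.false

theorem hitCol_le_and_rowHit_eq_negL_of_hitCol_eq (hw : IsKrewerasWord n w) {i : ℕ}
    (hi : hitCol w j = i + 1) :
    hitCol w i ≤ j + 3 * n ∧ rowHit w i = negL (rowHit w j) := by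
  have := hw.add_two_le_hitCol j
  have h := (hw.iterate_pro j).hitCol_le_and_rowHit_eq_negL (a := i - j)
    (by rw [hitCol] at this hi; lia)
  have hcol := hitCol_iterate_pro w j (i - j)
  rw [rowHit_iterate_pro, Nat.sub_add_cancel (by lia)] at h
  rw [Nat.sub_add_cancel (by lia)] at hcol
  exact ⟨by lia, h.2⟩

theorem exists_hitCol_eq_length_add_one (hw : IsKrewerasWord n w) (ha : kiota w = a + 1) :
    ∃ p, a < p ∧ p < 3 * n ∧ hitCol w p = 3 * n + 1 ∧ rowHit w p = hitLetter w := by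
  have hlet := hw.rowLetter_succ_last 0
  rw [zero_add, rowHit_zero, Nat.add_comm 1] at hlet
  obtain ⟨p, hp, hcol, hhit⟩ := hw.exists_hitCol_eq (j := 1) (m := 3 * n + 1)
    (by have := hw.kiota_lt; lia) (by lia) (hlet ▸ hw.hitLetter_ne_A)
  rw [hlet] at hhit
  have := hw.add_two_le_hitCol p
  have := hw.kiota_lt
  have hne : p ≠ a := by
    rintro rfl
    have := (hw.hitCol_le_and_rowHit_eq_negL ha).1
    lia
  refine ⟨p, ?_, by lia, hcol, hhit⟩
  by_contra hpa
  have := hw.lt_hitCol_of_rowHit_eq ha hp (by lia) (by lia) hhit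
  lia

theorem rowHeight_length_add_le (hw : IsKrewerasWord n w) (ha : kiota w = a + 1) (hy : y ≠ A)
    (hyx : y ≠ hitLetter w) (hj : 1 ≤ j) (hja : j ≤ a) (ham : a ≤ m) (hm : m ≤ 3 * n) :
    rowHeight w y j (3 * n) + rowHeight w (hitLetter w) j a + 1 ≤
      rowHeight w y j m + rowHeight w (hitLetter w) j (3 * n) := by
  have hx := hw.hitLetter_ne_A
  have := hw.kiota_lt
  induction j, hj using Nat.le_induction generalizing m with
  | base =>
    have hx1 := hw.rowHeight_one ha hx (m := 3 * n) (by lia) le_rfl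
    have hy1 := hw.rowHeight_one ha hy (m := 3 * n) (by lia) le_rfl
    have := hw.rowHeight_zero_length hx
    have := hw.rowHeight_zero_length hy
    have := hw.rowHeight_hitLetter_one ha
    have := hw.rowHeight_nonneg hy 1 m
    lia
  | succ j hj ih =>
    have ihm := ih (by lia) ham hm
    have hxa := hw.rowHeight_succ hx (j := j) (m := a) (by lia) (by lia)
    have hxL := hw.rowHeight_succ hx (j := j) (m := 3 * n) (by lia) (by lia)
    have hym := hw.rowHeight_succ hy (j := j) (m := m) (by lia) (by lia)
    have hyL := hw.rowHeight_succ hy (j := j) (m := 3 * n) (by lia) (by lia)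
    have hhit := hw.rowHit_eq_or_eq hx hy hyx j
    rcases le_or_gt (hitCol w j) a with hsa | has
    · lia
    rcases lt_or_ge (3 * n) (hitCol w j) with hLs | hsL
    · lia
    have hhit : rowHit w j = y := hhit.resolve_left fun hhit ↦ by
      have := hw.lt_hitCol_of_rowHit_eq ha hj hja has hhit
      lia
    rcases le_or_gt (hitCol w j) m with hsm | hms
    · lia
    · have ihs := ih (by lia) has.le hsL
      rw [hw.rowHeight_hitCol hhit] at ihs
      have := hw.rowHeight_pos hy (by lia) hms
      lia

end IsKrewerasWord

/-- Past column `3 * n` and up to column `m`, the `x`-height of row `j` is somewhere outpaced by the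
`y`-height at `m`, both being measured from column `3 * n`. This property is inherited by the next
row; the column of the smaller `x`-height may depend on the row. -/
def Outpaced (n : ℕ) (w : List KLetter) (x y : KLetter) (j m : ℕ) : Prop :=
  ∃ k, 3 * n < k ∧ k ≤ m ∧
    rowHeight w x j k + rowHeight w y j (3 * n) < rowHeight w y j m + rowHeight w x j (3 * n)

/-- Past column `3 * n` and up to column `m`, the `x`-height of row `j` drops to its value at
column `a`. It is what replaces `Outpaced` in the rows where the latter may still fail. -/
def DropsTo (n : ℕ) (w : List KLetter) (x : KLetter) (a j m : ℕ) : Prop :=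
  ∃ k, 3 * n < k ∧ k ≤ m ∧ rowHeight w x j k ≤ rowHeight w x j a

theorem DropsTo.mono {n : ℕ} {w : List KLetter} {x : KLetter} {a j l m : ℕ}
    (h : DropsTo n w x a j l) (hlm : l ≤ m) : DropsTo n w x a j m :=
  let ⟨k, hk, hkl, hle⟩ := h
  ⟨k, hk, hkl.trans hlm, hle⟩

namespace IsKrewerasWord

variable {n : ℕ} [NeZero n] {w : List KLetter} {x y : KLetter} {a j m : ℕ}

theorem outpaced_succ (hw : IsKrewerasWord n w) (hx : x ≠ A) (hy : y ≠ A) (hyx : y ≠ x)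
    (hj : j < 3 * n) (hm : m ≤ j + 3 * n) (hs : hitCol w j ≠ 3 * n + 1)
    (houtpaced : Outpaced n w x y j m) : Outpaced n w x y (j + 1) m := by
  obtain ⟨k, hLk, hkm, hlt⟩ := houtpaced
  have hstep (l : ℕ) (hl : 3 * n ≤ l) (hlm : l ≤ m) :=
    hw.rowHeight_succ hx (j := j) (m := l) (by lia) (by lia)
  have hxk := hstep k hLk.le hkm
  have hxL := hstep (3 * n) le_rfl (by lia)
  have hym := hw.rowHeight_succ hy (j := j) (m := m) (by lia) (by lia)
  have hyL := hw.rowHeight_succ hy (j := j) (m := 3 * n) (by lia) (by lia)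
  rcases hw.rowHit_eq_or_eq hx hy hyx j with hhit | hhit
  · rcases lt_or_ge k (hitCol w j) with hks | hsk
    · exact ⟨k, hLk, hkm, by lia⟩
    rcases le_or_gt (hitCol w j) (3 * n) with hsL | hLs
    · exact ⟨k, hLk, hkm, by lia⟩
    have hpred := hw.rowHeight_hitCol_sub_one_of_rowHit_eq hhit
    have hxpred := hstep (hitCol w j - 1) (by lia) (by lia)
    have := hw.rowHeight_nonneg hx j k
    exact ⟨hitCol w j - 1, by lia, by lia, by lia⟩
  · exact ⟨k, hLk, hkm, by lia⟩

theorem dropsTo_succ_of_hitCol_le_or_rowHit_eq (hw : IsKrewerasWord n w) (ha : kiota w = a + 1)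
    (hj : 1 ≤ j) (hja : j < a) (hm : m ≤ j + 3 * n)
    (hcol : hitCol w j ≤ a ∨ rowHit w j = hitLetter w) (hdrops : DropsTo n w (hitLetter w) a j m) :
    DropsTo n w (hitLetter w) a (j + 1) m := by
  obtain ⟨k, hLk, hkm, hle⟩ := hdrops
  have hx := hw.hitLetter_ne_A
  have := hw.kiota_lt
  have hstep (l : ℕ) (hjl : j < l) (hlm : l ≤ m) :=
    hw.rowHeight_succ hx (j := j) (m := l) hjl (by lia)
  have hstep_a := hstep a hja (by lia)
  have hstep_k := hstep k (by lia) hkm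
  rcases le_or_gt (hitCol w j) a with hsa | has
  · exact ⟨k, hLk, hkm, by lia⟩
  rcases lt_or_ge k (hitCol w j) with hks | hsk
  · exact ⟨k, hLk, hkm, by lia⟩
  have hhit := hcol.resolve_left has.not_ge
  have := hw.lt_hitCol_of_rowHit_eq ha hj hja has hhit
  have := hw.rowHeight_hitCol_sub_one_of_rowHit_eq hhit
  have := hw.rowHeight_pos hx hja has
  have := hstep (hitCol w j - 1) (by lia) (by lia)
  exact ⟨hitCol w j - 1, by lia, by lia, by lia⟩

theorem dropsTo_succ_of_lt_hitCol (hw : IsKrewerasWord n w) (ha : kiota w = a + 1) (hja : j < a)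
    (hm : m ≤ j + 3 * n) (hcol : 3 * n + 1 < hitCol w j) (hms : m ≤ hitCol w j)
    (hhit : rowHit w j ≠ hitLetter w) (hdrops : DropsTo n w (hitLetter w) a j m) :
    DropsTo n w (hitLetter w) a (j + 1) m := by
  obtain ⟨k, hLk, hkm, hle⟩ := hdrops
  have := hw.kiota_lt
  have hstep (l : ℕ) (hjl : j < l) (hlm : l ≤ m) :=
    hw.rowHeight_succ hw.hitLetter_ne_A (j := j) (m := l) hjl (by lia)
  have hstep_a := hstep a hja (by lia)
  rcases (hkm.trans hms).eq_or_lt with rfl | hks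
  · have := hw.rowHeight_hitCol_sub_one_of_rowHit_ne hhit
    have := hstep (hitCol w j - 1) (by lia) (by lia)
    exact ⟨hitCol w j - 1, by lia, by lia, by lia⟩
  · have := hstep k (by lia) hkm
    exact ⟨k, hLk, hkm, by lia⟩

theorem outpaced_of_dropsTo (hw : IsKrewerasWord n w) (ha : kiota w = a + 1) (hy : y ≠ A)
    (hyx : y ≠ hitLetter w) (hj : 1 ≤ j) (hja : j ≤ a) {l : ℕ} (hal : a ≤ l) (hl : l ≤ 3 * n)
    (hzero : rowHeight w y j l = 0) (hdrops : DropsTo n w (hitLetter w) a j m) :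
    Outpaced n w (hitLetter w) y j m := by
  obtain ⟨k, hLk, hkm, hle⟩ := hdrops
  have := hw.rowHeight_length_add_le ha hy hyx hj hja hal hl
  have := hw.rowHeight_nonneg hy j m
  exact ⟨k, hLk, hkm, by lia⟩

theorem outpaced_or_dropsTo_succ (hw : IsKrewerasWord n w) (ha : kiota w = a + 1)
    (hy : y ≠ A) (hyx : y ≠ hitLetter w) (hj : 1 ≤ j) (hja : j < a) (hLm : 3 * n < m)
    (hm : m ≤ j + 3 * n)
    (ih : ∀ l, 3 * n < l → l ≤ m →
      Outpaced n w (hitLetter w) y j l ∨ DropsTo n w (hitLetter w) a j l) :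
    Outpaced n w (hitLetter w) y (j + 1) m ∨ DropsTo n w (hitLetter w) a (j + 1) m := by
  obtain ⟨p, hap, -, hp, -⟩ := hw.exists_hitCol_eq_length_add_one ha
  have := hw.kiota_lt
  have hcol : hitCol w j ≠ 3 * n + 1 := hp ▸ hw.hitCol_injective.ne (by lia)
  have outpaced_succ :=
    hw.outpaced_succ hw.hitLetter_ne_A hy hyx (j := j) (by lia) hm hcol
  obtain houtpaced | hdrops := ih m hLm le_rfl
  · exact .inl (outpaced_succ houtpaced)
  by_cases hearly : hitCol w j ≤ a ∨ rowHit w j = hitLetter w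
  · exact .inr (hw.dropsTo_succ_of_hitCol_le_or_rowHit_eq ha hj hja hm hearly hdrops)
  push Not at hearly
  have hhit := (hw.rowHit_eq_or_eq hw.hitLetter_ne_A hy hyx j).resolve_left hearly.2
  rcases le_or_gt (hitCol w j) (3 * n) with hsL | hLs
  · exact .inl (outpaced_succ (hw.outpaced_of_dropsTo ha hy hyx hj hja.le hearly.1.le hsL
      (hw.rowHeight_hitCol hhit) hdrops))
  rcases le_or_gt m (hitCol w j) with hms | hsm
  · exact .inr (hw.dropsTo_succ_of_lt_hitCol ha hja hm (by lia) hms hearly.2 hdrops)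
  obtain ⟨k, hLk, hks, hlt⟩ | hdrops := ih (hitCol w j) hLs hsm.le
  · rw [hw.rowHeight_hitCol hhit] at hlt
    have := hw.rowHeight_nonneg hy j m
    exact .inl (outpaced_succ ⟨k, hLk, by lia, by lia⟩)
  · exact .inr ((hw.dropsTo_succ_of_lt_hitCol ha hja (by lia) (by lia) le_rfl hearly.2
      hdrops).mono hsm.le)

theorem outpaced_or_dropsTo (hw : IsKrewerasWord n w) (ha : kiota w = a + 1)
    (hy : y ≠ A) (hyx : y ≠ hitLetter w) (hj : 1 ≤ j) (hja : j ≤ a) (hLm : 3 * n < m)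
    (hm : m ≤ j + 3 * n) :
    Outpaced n w (hitLetter w) y j m ∨ DropsTo n w (hitLetter w) a j m := by
  have hx := hw.hitLetter_ne_A
  have hlast (i : ℕ) :
      rowHeight w (hitLetter w) i (i + 3 * n) ≤ rowHeight w (hitLetter w) i a :=
    (hw.rowHeight_add_length hx i).trans_le (hw.rowHeight_nonneg hx i a)
  induction j, hj using Nat.le_induction generalizing m with
  | base => exact .inr ⟨1 + 3 * n, by lia, by lia, hlast 1⟩
  | succ j hj ih =>
    rcases hm.eq_or_lt with rfl | hm
    · exact .inr ⟨j + 1 + 3 * n, by lia, le_rfl, hlast (j + 1)⟩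
    · exact hw.outpaced_or_dropsTo_succ ha hy hyx hj hja hLm (by lia)
        fun l hLl hlm ↦ ih (by lia) hLl (by lia)

theorem outpaced_of_kiota_eq (hw : IsKrewerasWord n w) (ha : kiota w = a + 1) (hy : y ≠ A)
    (hyx : y ≠ hitLetter w) (hLm : 3 * n < m) (hm : m ≤ a + 3 * n) :
    Outpaced n w (hitLetter w) y a m := by
  have ha1 : 1 ≤ a := by have := hw.two_le_kiota; lia
  have := hw.kiota_lt
  exact (hw.outpaced_or_dropsTo ha hy hyx ha1 le_rfl hLm hm).elim id
    (hw.outpaced_of_dropsTo ha hy hyx ha1 le_rfl le_rfl (by lia) (rowHeight_self w y a))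

theorem outpaced_of_le (hw : IsKrewerasWord n w) (hx : x ≠ A) (hy : y ≠ A) (hyx : y ≠ x) {i p : ℕ}
    (hij : i ≤ j) (hjp : j ≤ p) (hp : hitCol w p = 3 * n + 1) (hm : m ≤ i + 3 * n)
    (houtpaced : Outpaced n w x y i m) : Outpaced n w x y j m := by
  have := hw.add_two_le_hitCol p
  induction j, hij using Nat.le_induction with
  | base => exact houtpaced
  | succ j hij ih =>
    have hcol : hitCol w j ≠ 3 * n + 1 := hp ▸ hw.hitCol_injective.ne (by lia)
    exact hw.outpaced_succ hx hy hyx (by lia) (by lia) hcol (ih (by lia))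

theorem rowHeight_length_pos (hw : IsKrewerasWord n w) (ha : kiota w = a + 1)
    (hx : x ≠ A) (hLm : 3 * n < m) (hm : m ≤ a + 3 * n) :
    0 < rowHeight w x (3 * n) m := by
  obtain ⟨p, hap, hpL, hp, hhit⟩ := hw.exists_hitCol_eq_length_add_one ha
  suffices hlt : rowHeight w x (p + 1) (3 * n) < rowHeight w x (p + 1) m by
    have := hw.rowHeight_sub_le hx (i := p + 1) (j := 3 * n) hpL le_rfl hLm.le (by lia)
    rw [rowHeight_self] at this
    lia
  have hm_succ := hw.rowHeight_succ hx (j := p) (m := m) (by lia) (by lia)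
  have hL_succ := hw.rowHeight_succ hx (j := p) (m := 3 * n) hpL (by lia)
  have hL := hw.rowHeight_hitCol_sub_one_of_rowHit_eq hhit
  rw [hp, Nat.add_sub_cancel] at hL
  rcases eq_or_ne x (hitLetter w) with rfl | hxh
  · have := hw.rowHeight_nonneg hx p m
    lia
  · obtain ⟨k, -, -, hlt⟩ := hw.outpaced_of_le hw.hitLetter_ne_A hx hxh hap.le le_rfl hp hm
      (hw.outpaced_of_kiota_eq ha hx hxh hLm hm)
    have := hw.rowHeight_nonneg hw.hitLetter_ne_A p k
    lia

theorem kiota_le_kiota_iterate_pro (hw : IsKrewerasWord n w) :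
    kiota w ≤ kiota (pro^[3 * n] w) := by
  obtain ⟨a, ha⟩ : ∃ a, kiota w = a + 1 :=
    Nat.exists_eq_add_one.2 (by have := hw.two_le_kiota; lia)
  by_contra hlt
  have := hw.add_two_le_hitCol (3 * n)
  have hpos := hw.rowHeight_length_pos ha (hw.rowHit_ne_A (3 * n)) (m := hitCol w (3 * n))
    (by lia) (by rw [hitCol]; lia)
  rw [hw.rowHeight_hitCol rfl] at hpos
  exact hpos.false

theorem mem_periodicPts_pro (hw : IsKrewerasWord n w) : w ∈ Function.periodicPts pro :=
  mem_periodicPts_of_injOn (finite_setOf_isKrewerasWord n) (fun _ hv ↦ IsKrewerasWord.pro hv)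
    (pro_injOn n) hw

theorem kiota_iterate_pro (hw : IsKrewerasWord n w) : kiota (pro^[3 * n] w) = kiota w := by
  have hmono : Monotone fun k ↦ kiota ((pro^[3 * n])^[k] w) := by
    refine monotone_nat_of_le_succ fun k ↦ ?_
    rw [Function.iterate_succ_apply', ← Function.iterate_mul]
    exact (hw.iterate_pro _).kiota_le_kiota_iterate_pro
  obtain ⟨N, hN, hper⟩ := hw.mem_periodicPts_pro
  refine le_antisymm ?_ hw.kiota_le_kiota_iterate_pro
  calc kiota (pro^[3 * n] w) ≤ kiota ((pro^[3 * n])^[N] w) := hmono hN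
    _ = kiota w := congrArg kiota (hper.iterate (3 * n))

theorem hitCol_add_length (hw : IsKrewerasWord n w) (j : ℕ) :
    hitCol w (j + 3 * n) = hitCol w j + 3 * n := by
  rw [hitCol, hitCol, Nat.add_comm j, Function.iterate_add_apply,
    (hw.iterate_pro j).kiota_iterate_pro]
  lia

end IsKrewerasWord

namespace IsKrewerasWord

variable {n : ℕ} [NeZero n] {w : List KLetter} {j c : ℕ}

theorem getD_hitCol_sub_one (hw : IsKrewerasWord n w) (hj : hitCol w j ≤ 3 * n) :
    w.getD (hitCol w j - 1) A = rowHit w j := by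
  have := hw.add_two_le_hitCol j
  have hA : rowLetter w j (hitCol w j) ≠ A := rowLetter_hitCol w j ▸ hw.rowHit_ne_A j
  exact (hw.rowLetter_eq_of_le (Nat.zero_le j) (by lia) (by lia) hA).trans (rowLetter_hitCol w j)

theorem getD_eq_A_of_hitCol_eq (hw : IsKrewerasWord n w) (hj : j < 3 * n)
    (hc : hitCol w j = c + 1 + 3 * n) : w.getD c A = A := by
  by_contra hA
  have := hw.hitCol_lt j
  obtain ⟨i, -, hi, -⟩ := hw.exists_hitCol_eq (j := 0) (m := c + 1) (by lia) (by lia) hA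
  have := hw.hitCol_injective (a₁ := i + 3 * n) (a₂ := j) (by rw [hw.hitCol_add_length, hi, hc])
  lia

theorem rowHit_eq_of_hitCol_eq (hw : IsKrewerasWord n w) (hc : hitCol w j = c + 1 + 3 * n) :
    rowHit w c = rowHit w j := by
  have hlast := hw.rowLetter_succ_last c
  obtain ⟨i, -, hi, hhit⟩ := hw.exists_hitCol_eq (j := c + 1) (m := c + 1 + 3 * n)
    (Nat.lt_add_of_pos_right (Nat.pos_of_neZero _)) le_rfl (hlast ▸ hw.rowHit_ne_A c)
  rw [← hlast, ← hhit, hw.hitCol_injective (hi.trans hc.symm)]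

theorem hitCol_lt_of_hitCol_eq (hw : IsKrewerasWord n w) (hj : j < 3 * n)
    (hc : hitCol w j = c + 1 + 3 * n) : hitCol w c < 3 * n := by
  have := (hw.hitCol_le_and_rowHit_eq_negL_of_hitCol_eq (j := j) (i := c + 3 * n) (by lia)).1
  rw [hw.hitCol_add_length] at this
  lia

theorem ksigma_succ (hw : IsKrewerasWord n w) (j : ℕ) :
    ksigma n w (j + 1) = (hitCol w j - 1) % (3 * n) + 1 := by
  have := hw.add_two_le_hitCol j
  rw [hitCol] at this
  rw [ksigma, Nat.add_sub_cancel, hitCol,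
    show kiota (pro^[j] w) + (j + 1) - 2 = j + kiota (pro^[j] w) - 1 by lia]

theorem ksigma_succ_of_hitCol_le (hw : IsKrewerasWord n w) (hj : hitCol w j ≤ 3 * n) :
    ksigma n w (j + 1) = hitCol w j := by
  have := hw.add_two_le_hitCol j
  rw [hw.ksigma_succ, Nat.mod_eq_of_lt (by lia)]
  lia

theorem ksigma_succ_of_hitCol_eq (hw : IsKrewerasWord n w) (hj : j < 3 * n)
    (hc : hitCol w j = c + 1 + 3 * n) : ksigma n w (j + 1) = c + 1 := by
  have := hw.hitCol_lt j
  rw [hw.ksigma_succ, hc, show c + 1 + 3 * n - 1 = c + 3 * n by lia, Nat.add_mod_right,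
    Nat.mod_eq_of_lt (by lia)]

end IsKrewerasWord

/-- If `w_i ∈ {B, C}`, then either `w_{σ_w(i)} = -w_i`, or else `w_{σ_w(i)} = A` and
`w_{σ_w(σ_w(i))} = -w_i`, where `-B = C` and `-C = B` (letters are 1-indexed). -/
theorem ksigma_of_BC (n : ℕ) (w : List KLetter) (hw : IsKrewerasWord n w)
    (i : ℕ) (hi1 : 1 ≤ i) (hi2 : i ≤ 3 * n)
    (hBC : w.getD (i - 1) KLetter.A = KLetter.B ∨
           w.getD (i - 1) KLetter.A = KLetter.C) :
    w.getD (ksigma n w i - 1) KLetter.A = negL (w.getD (i - 1) KLetter.A) ∨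
      (w.getD (ksigma n w i - 1) KLetter.A = KLetter.A ∧
        w.getD (ksigma n w (ksigma n w i) - 1) KLetter.A
          = negL (w.getD (i - 1) KLetter.A)) := by
  have : NeZero n := ⟨by lia⟩
  have hA : w.getD (i - 1) A ≠ A := by rcases hBC with h | h <;> rw [h] <;> decide
  obtain ⟨k, rfl⟩ := Nat.exists_eq_add_one.2 hi1
  obtain ⟨j, -, hj, hhit : rowHit w j = w.getD k A⟩ :=
    hw.exists_hitCol_eq (j := 0) hi1 (by lia) hA
  have hneg := (hw.hitCol_le_and_rowHit_eq_negL_of_hitCol_eq hj).2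
  rw [Nat.add_sub_cancel, ← hhit, ← hneg]
  rcases le_or_gt (hitCol w k) (3 * n) with hle | hlt
  · left
    rw [hw.ksigma_succ_of_hitCol_le hle, hw.getD_hitCol_sub_one hle]
  · right
    obtain ⟨c, hc⟩ : ∃ c, hitCol w k = c + 1 + 3 * n := ⟨hitCol w k - 3 * n - 1, by lia⟩
    have hle := (hw.hitCol_lt_of_hitCol_eq hi2 hc).le
    rw [hw.ksigma_succ_of_hitCol_eq hi2 hc, hw.ksigma_succ_of_hitCol_le hle,
      hw.getD_hitCol_sub_one hle, hw.rowHit_eq_of_hitCol_eq hc]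
    exact ⟨hw.getD_eq_A_of_hitCol_eq hi2 hc, rfl⟩
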